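/- Let P be a set of n points in the plane in convex position and let k ≥ 1 be an integer. Then every partition of the edge set of the complete geometric graph K(P) into classes each of which is k-plane uses at least (n−1)/(4.93·√k) classes; that is, if the partition has c classes then c ≥ (n−1)/(4.93·√k). -/

import Mathlib

/-- Points of the plane. -/
abbrev Pt : Type := ℝ × ℝ

/-- A finite point set is in general position if no three of its points are collinear. -/
def GenPos (P : Finset Pt) : Prop :=
  ∀ p ∈ P, ∀ q ∈ P, ∀ r ∈ P, p ≠ q → p ≠ r → q ≠ r →
    ¬ Collinear ℝ ({p, q, r} : Set Pt)

/-- A finite point set is in convex position: general position and no point lies in the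
convex hull of the others. -/
def ConvexPos (P : Finset Pt) : Prop :=
  GenPos P ∧ ∀ p ∈ P, p ∉ convexHull ℝ ((P.erase p : Finset Pt) : Set Pt)

/-- The edge set of the complete geometric graph on `P`: all unordered pairs of
distinct points of `P`. -/
def KEdges (P : Finset Pt) : Set (Sym2 Pt) :=
  {e | ∃ p ∈ P, ∃ q ∈ P, p ≠ q ∧ e = s(p, q)}

/-- Two edges cross: they share no endpoint and their open segments intersect. -/
def Cross (e f : Sym2 Pt) : Prop :=
  (∀ x, x ∈ e → x ∉ f) ∧
    ∃ p q r s : Pt, e = s(p, q) ∧ f = s(r, s) ∧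
      (openSegment ℝ p q ∩ openSegment ℝ r s).Nonempty

/-- A set of edges is `k`-plane if each of its edges crosses at most `k` other edges
of the set. -/
def KPlane (k : ℕ) (E : Set (Sym2 Pt)) : Prop :=
  ∀ e ∈ E, {f | f ∈ E ∧ Cross e f}.ncard ≤ k

/-- A set of edges is `k`-quasi-plane if it contains no `k` pairwise crossing edges. -/
def KQuasiPlane (k : ℕ) (E : Set (Sym2 Pt)) : Prop :=
  ¬ ∃ S : Finset (Sym2 Pt), ↑S ⊆ E ∧ S.card = k ∧
      (S : Set (Sym2 Pt)).Pairwise Cross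

/-- The set of crossing pairs (unordered) of a set of edges. -/
def CrossPairs (E : Set (Sym2 Pt)) : Set (Sym2 (Sym2 Pt)) :=
  {c | ∃ e ∈ E, ∃ f ∈ E, Cross e f ∧ c = s(e, f)}

/-- A crossing family in `K(P)`: a finite set of pairwise crossing edges of `K(P)`. -/
def CrossingFamily (P : Finset Pt) (S : Finset (Sym2 Pt)) : Prop :=
  ↑S ⊆ KEdges P ∧ (S : Set (Sym2 Pt)).Pairwise Cross

/-- `E` forms a spanning tree on the point set `P`: all edges are edges of `K(P)` and the
corresponding graph on the points of `P` is connected and acyclic. -/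
def IsSpanningTreeOn (P : Finset Pt) (E : Set (Sym2 Pt)) : Prop :=
  E ⊆ KEdges P ∧
    (SimpleGraph.fromRel (fun a b : {x // x ∈ P} => s((a : Pt), (b : Pt)) ∈ E)).IsTree


/-- Diagonals of an ordered finite set, viewed as the vertices of a convex polygon. -/
def DiagOf (S : Finset ℕ) (e : ℕ × ℕ) : Prop :=
  e.1 ∈ S ∧ e.2 ∈ S ∧ e.1 < e.2 ∧ (∃ x ∈ S, e.1 < x ∧ x < e.2) ∧
    (∃ x ∈ S, x < e.1 ∨ e.2 < x)

/-- Interleaving of two ordered pairs. -/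
def Interl (e f : ℕ × ℕ) : Prop :=
  (f.1 < e.1 ∧ e.1 < f.2 ∧ f.2 < e.2) ∨ (e.1 < f.1 ∧ f.1 < e.2 ∧ e.2 < f.2)

/-- Number of elements of `S` below `x`. -/
def rk (S : Finset ℕ) (x : ℕ) : ℕ := (S.filter (· < x)).card

lemma rk_lt {S : Finset ℕ} {x y : ℕ} (hx : x ∈ S) (h : x < y) : rk S x < rk S y := by
  unfold rk
  apply Finset.card_lt_card
  rw [Finset.ssubset_iff_of_subset]
  · exact ⟨x, by simp [hx, h], by simp⟩
  · intro z hz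
    simp only [Finset.mem_filter] at hz ⊢
    exact ⟨hz.1, by omega⟩

lemma rk_inj {S : Finset ℕ} {x y : ℕ} (hx : x ∈ S) (hy : y ∈ S) (h : rk S x = rk S y) :
    x = y := by
  rcases lt_trichotomy x y with h1 | h1 | h1
  · have := rk_lt hx h1; omega
  · exact h1
  · have := rk_lt hy h1; omega

lemma rk_le {S : Finset ℕ} {x y : ℕ} (h : x ≤ y) : rk S x ≤ rk S y := by
  unfold rk
  apply Finset.card_le_card
  intro z hz
  simp only [Finset.mem_filter] at hz ⊢
  exact ⟨hz.1, by omega⟩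

lemma rk_lt_card {S : Finset ℕ} {x : ℕ} (hx : x ∈ S) : rk S x < S.card := by
  unfold rk
  apply Finset.card_lt_card
  rw [Finset.ssubset_iff_of_subset (Finset.filter_subset _ _)]
  exact ⟨x, hx, by simp⟩

lemma card_between {S : Finset ℕ} {x y : ℕ} (hx : x ∈ S) (h : x < y) :
    (S.filter (fun z => x < z ∧ z < y)).card + rk S x + 1 = rk S y := by
  unfold rk
  have h1 : S.filter (· < y) =
      S.filter (fun z => x < z ∧ z < y) ∪ (S.filter (· < x) ∪ {x}) := by
    ext z
    simp only [Finset.mem_filter, Finset.mem_union, Finset.mem_singleton]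
    constructor
    · rintro ⟨h2, h3⟩
      rcases lt_trichotomy x z with h4 | h4 | h4
      · exact Or.inl ⟨h2, h4, h3⟩
      · exact Or.inr (Or.inr h4.symm)
      · exact Or.inr (Or.inl ⟨h2, h4⟩)
    · rintro (h2 | h2 | h2)
      · exact ⟨h2.1, h2.2.2⟩
      · exact ⟨h2.1, by omega⟩
      · subst h2; exact ⟨hx, h⟩
  rw [h1, Finset.card_union_of_disjoint, Finset.card_union_of_disjoint, Finset.card_singleton]
  · omega
  · simp
  · rw [Finset.disjoint_left]
    intro z hz
    simp only [Finset.mem_filter, Finset.mem_union, Finset.mem_singleton] at hz ⊢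
    omega

/-- Counting short pairs by the rank of the left endpoint. -/
lemma card_short {S : Finset ℕ} (E : Finset (ℕ × ℕ)) (lo w s : ℕ)
    (h : ∀ e ∈ E, e.1 ∈ S ∧ e.2 ∈ S ∧ lo ≤ rk S e.1 ∧ rk S e.1 < lo + w ∧
      rk S e.1 + 2 ≤ rk S e.2 ∧ rk S e.2 ≤ rk S e.1 + s) :
    E.card ≤ w * (s - 1) := by
  have : (Finset.Ico lo (lo + w) ×ˢ Finset.Icc 2 s).card = w * (s - 1) := by
    simp only [Finset.card_product, Nat.card_Ico, Nat.card_Icc]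
    congr 1 <;> omega
  rw [← this]
  apply Finset.card_le_card_of_injOn (fun e => (rk S e.1, rk S e.2 - rk S e.1))
  · intro e he
    have := h e he
    simp only [Finset.coe_product, Set.mem_prod, Finset.mem_coe, Finset.mem_Ico, Finset.mem_Icc]
    omega
  · intro e he f hf hef
    have h1 := h e he
    have h2 := h f hf
    simp only [Prod.mk.injEq] at hef
    exact Prod.ext (rk_inj h1.1 h2.1 hef.1) (rk_inj h1.2.1 h2.2.1 (by omega))

lemma diag_rk {S : Finset ℕ} {e : ℕ × ℕ} (h : DiagOf S e) : rk S e.1 + 2 ≤ rk S e.2 := by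
  obtain ⟨h1, h2, h3, ⟨x, hx, hx1, hx2⟩, -⟩ := h
  have := rk_lt h1 hx1
  have := rk_lt hx hx2
  omega

open Classical in
lemma comb (k s : ℕ) (A : ℝ) (hs : 1 ≤ s) (hA : (k : ℝ) + 1 ≤ (A - (s - 1)) * s)
    (hA2 : 2 * (s : ℝ) ≤ A) (n : ℕ) :
    ∀ S : Finset ℕ, S.card = n → 3 ≤ n → ∀ E : Finset (ℕ × ℕ), (∀ e ∈ E, DiagOf S e) →
      (∀ e ∈ E, (E.filter (Interl e)).card ≤ k) → (E.card : ℝ) ≤ A * ((n : ℝ) - 3) := by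
  have hs' : (1 : ℝ) ≤ s := by exact_mod_cast hs
  induction n using Nat.strong_induction_on with
  | _ n ih =>
  intro S hSn hn E hE hk
  have hn' : (3 : ℝ) ≤ n := by exact_mod_cast hn
  by_cases hlong : ∃ e ∈ E, rk S e.1 + s < rk S e.2
  · obtain ⟨e, he, hmin⟩ := Finset.exists_min_image
      (E.filter (fun e => rk S e.1 + s < rk S e.2)) (fun e => rk S e.2 - rk S e.1)
      (by obtain ⟨e, h1, h2⟩ := hlong; exact ⟨e, by simp [h1, h2]⟩)
    simp only [Finset.mem_filter] at he hmin
    obtain ⟨heE, hes⟩ := he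
    have hed := hE e heE
    obtain ⟨e1, e2, e12, -, ⟨o, ho, ho'⟩⟩ := hed
    set I := S.filter (fun z => e.1 < z ∧ z < e.2) with hI
    have hIc := card_between e1 e12
    rw [← hI] at hIc
    set S' := S \ I with hS'
    have hS'c : S'.card = n - I.card := by
      rw [hS', Finset.card_sdiff_of_subset (Finset.filter_subset _ _), hSn]
    have memS' : ∀ z, z ∈ S' ↔ z ∈ S ∧ (z ≤ e.1 ∨ e.2 ≤ z) := by
      intro z
      simp only [hS', hI, Finset.mem_sdiff, Finset.mem_filter]
      constructor
      · rintro ⟨h1, h2⟩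
        refine ⟨h1, ?_⟩
        by_contra h3
        exact h2 ⟨h1, by omega, by omega⟩
      · rintro ⟨h1, h2⟩
        exact ⟨h1, by omega⟩
    have h3 : 3 ≤ S'.card := by
      have hsub : ({e.1, e.2, o} : Finset ℕ) ⊆ S' := by
        intro z hz
        simp only [Finset.mem_insert, Finset.mem_singleton] at hz
        rw [memS']
        rcases hz with h | h | h <;> subst h
        · exact ⟨e1, by omega⟩
        · exact ⟨e2, by omega⟩
        · exact ⟨ho, by omega⟩
      have := Finset.card_le_card hsub
      rwa [Finset.card_eq_three.mpr ⟨e.1, e.2, o, by omega, by omega, by omega, rfl⟩] at this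
    have hIn : I.card ≤ n := by rw [← hSn]; exact Finset.card_filter_le _ _
    set E' := E.filter (fun f => f.1 ∈ S' ∧ f.2 ∈ S' ∧ f ≠ e) with hE'
    have key := ih S'.card (by omega) S' rfl h3 E' (by
      intro f hf
      simp only [hE', Finset.mem_filter] at hf
      obtain ⟨hfE, hf1, hf2, hfe⟩ := hf
      obtain ⟨g1, g2, g3, ⟨x, hx, hx1, hx2⟩, ⟨y, hy, hy1⟩⟩ := hE f hfE
      have hne : ¬ (f.1 = e.1 ∧ f.2 = e.2) := fun h => hfe (Prod.ext h.1 h.2)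
      refine ⟨hf1, hf2, g3, ?_, ?_⟩
      · rw [memS'] at hf1 hf2
        by_cases hx3 : x ≤ e.1 ∨ e.2 ≤ x
        · exact ⟨x, (memS' x).2 ⟨hx, hx3⟩, hx1, hx2⟩
        · by_cases h : f.1 < e.1
          · exact ⟨e.1, (memS' _).2 ⟨e1, by omega⟩, h, by omega⟩
          · exact ⟨e.2, (memS' _).2 ⟨e2, by omega⟩, by omega, by omega⟩
      · rw [memS'] at hf1 hf2
        by_cases hy3 : y ≤ e.1 ∨ e.2 ≤ y
        · exact ⟨y, (memS' y).2 ⟨hy, hy3⟩, hy1⟩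
        · rcases hy1 with h | h
          · exact ⟨e.1, (memS' _).2 ⟨e1, by omega⟩, by omega⟩
          · exact ⟨e.2, (memS' _).2 ⟨e2, by omega⟩, by omega⟩)
      (by
        intro f hf
        refine le_trans (Finset.card_le_card ?_) (hk f (Finset.mem_of_mem_filter f hf))
        exact Finset.filter_subset_filter _ (Finset.filter_subset _ _))
    set N := E.filter (fun f => e.1 ≤ f.1 ∧ f.2 ≤ e.2 ∧ f ≠ e) with hN
    have hNc : N.card ≤ I.card * (s - 1) := by
      apply card_short (S := S) N (rk S e.1)
      intro f hf
      simp only [hN, Finset.mem_filter] at hf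
      obtain ⟨hfE, hf1, hf2, hfe⟩ := hf
      have hd := hE f hfE
      have hd2 := diag_rk hd
      have l1 := rk_le (S := S) hf1
      have l2 := rk_le (S := S) hf2
      refine ⟨hd.1, hd.2.1, l1, by omega, hd2, ?_⟩
      by_contra hcon
      have := hmin f ⟨hfE, by omega⟩
      exact hfe (Prod.ext (rk_inj hd.1 e1 (by omega)) (rk_inj hd.2.1 e2 (by omega)))
    have hsub : E ⊆ E' ∪ ({e} ∪ (E.filter (Interl e) ∪ N)) := by
      intro f hf
      have hd := hE f hf
      by_cases hfe : f = e
      · simp [hfe]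
      by_cases hin : f.1 ∈ S' ∧ f.2 ∈ S'
      · exact Finset.mem_union_left _ (by simp [hE', hf, hin, hfe])
      · apply Finset.mem_union_right
        apply Finset.mem_union_right
        rw [memS', memS'] at hin
        have hlt := hd.2.2.1
        by_cases hi : e.1 ≤ f.1 ∧ f.2 ≤ e.2
        · exact Finset.mem_union_right _ (by simp [hN, hf, hi, hfe])
        · apply Finset.mem_union_left
          simp only [Finset.mem_filter, hf, true_and, Interl]
          have h1 := hd.1
          have h2 := hd.2.1
          simp only [h1, h2, true_and] at hin
          omega
    have hc : E.card ≤ E'.card + (1 + (k + I.card * (s - 1))) := by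
      refine (Finset.card_le_card hsub).trans ((Finset.card_union_le _ _).trans ?_)
      have a1 := Finset.card_union_le {e} (E.filter (Interl e) ∪ N)
      have a2 := Finset.card_union_le (E.filter (Interl e)) N
      have a3 := hk e heE
      rw [Finset.card_singleton] at a1
      omega
    have hc' : (E.card : ℝ) ≤ E'.card + (1 + (k + I.card * (s - 1))) := by
      have : ((s - 1 : ℕ) : ℝ) = (s : ℝ) - 1 := by push_cast [hs]; ring
      rw [← this]
      exact_mod_cast hc
    have hIs : (s : ℝ) ≤ I.card := by
      have : s ≤ I.card := by omega
      exact_mod_cast this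
    have hcS : (S'.card : ℝ) = n - I.card := by
      rw [hS'c]; push_cast [hIn]; ring
    rw [hcS] at key
    have : (A - (s - 1)) * s ≤ (A - (s - 1)) * I.card :=
      mul_le_mul_of_nonneg_left hIs (by linarith)
    nlinarith
  · push Not at hlong
    rcases Nat.lt_or_ge n 4 with h4 | h4
    · have : n = 3 := by omega
      have hEe : E = ∅ := by
        rw [Finset.eq_empty_iff_forall_notMem]
        intro e he
        obtain ⟨e1, e2, e12, ⟨x, hx, hx'⟩, ⟨o, ho, ho'⟩⟩ := hE e he
        have hsub : ({e.1, x, e.2, o} : Finset ℕ) ⊆ S := by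
          intro z hz
          simp only [Finset.mem_insert, Finset.mem_singleton] at hz
          rcases hz with h | h | h | h <;> subst h <;> assumption
        have h5 := Finset.card_le_card hsub
        have h6 : ({e.1, x, e.2, o} : Finset ℕ).card = 4 := by
          rw [Finset.card_insert_of_notMem, Finset.card_eq_three.mpr
            ⟨x, e.2, o, by omega, by omega, by omega, rfl⟩]
          simp only [Finset.mem_insert, Finset.mem_singleton]
          omega
        omega
      simp [hEe, this]
    · have hc : E.card ≤ (n - 2) * (s - 1) := by
        apply card_short (S := S) E 0
        intro e he
        have hd := hE e he
        have := diag_rk hd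
        have := rk_lt_card hd.2.1
        have := hlong e he
        exact ⟨hd.1, hd.2.1, by omega, by omega, by omega, by omega⟩
      have hc' : (E.card : ℝ) ≤ (n - 2) * (s - 1) := by
        have a1 : ((s - 1 : ℕ) : ℝ) = (s : ℝ) - 1 := by push_cast [hs]; ring
        have a2 : ((n - 2 : ℕ) : ℝ) = (n : ℝ) - 2 := by
          rw [Nat.cast_sub (by omega)]; norm_num
        rw [← a1, ← a2]
        exact_mod_cast hc
      have h4' : (4 : ℝ) ≤ n := by exact_mod_cast h4
      nlinarith

lemma enum_rel {α : Type*} (P : Finset α) (R : α → α → Prop)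
    (hirr : ∀ a ∈ P, ¬ R a a)
    (htr : ∀ a ∈ P, ∀ b ∈ P, ∀ c ∈ P, R a b → R b c → R a c)
    (htot : ∀ a ∈ P, ∀ b ∈ P, a ≠ b → R a b ∨ R b a) (hne : P.Nonempty) :
    ∃ p : ℕ → α, (∀ i < P.card, p i ∈ P) ∧
      ∀ i j, i < j → j < P.card → R (p i) (p j) := by
  classical
  let r : α → ℕ := fun a => (P.filter (fun q => R q a)).card
  have hlt : ∀ a ∈ P, ∀ b ∈ P, R a b → r a < r b := by
    intro a ha b hb hab
    apply Finset.card_lt_card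
    rw [Finset.ssubset_iff_of_subset]
    · exact ⟨a, by simp [ha, hab], by simp [hirr a ha]⟩
    · intro z hz
      simp only [Finset.mem_filter] at hz ⊢
      exact ⟨hz.1, htr z hz.1 a ha b hb hz.2 hab⟩
  have hinj : Set.InjOn r P := by
    intro a ha b hb hab
    by_contra hne
    rcases htot a ha b hb hne with h | h
    · have := hlt a ha b hb h; omega
    · have := hlt b hb a ha h; omega
  have himg : P.image r = Finset.range P.card := by
    apply Finset.eq_of_subset_of_card_le
    · intro i hi
      simp only [Finset.mem_image, Finset.mem_range] at hi ⊢
      obtain ⟨a, ha, rfl⟩ := hi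
      apply Finset.card_lt_card
      rw [Finset.ssubset_iff_of_subset (Finset.filter_subset _ _)]
      exact ⟨a, ha, by simp [hirr a ha]⟩
    · rw [Finset.card_image_of_injOn hinj, Finset.card_range]
  have hex : ∀ i, ∃ a, i < P.card → a ∈ P ∧ r a = i := by
    intro i
    by_cases hi : i < P.card
    · have : i ∈ P.image r := by rw [himg]; simpa using hi
      simp only [Finset.mem_image] at this
      obtain ⟨a, ha⟩ := this
      exact ⟨a, fun _ => ha⟩
    · exact ⟨hne.choose, fun h => absurd h hi⟩
  choose p hp using hex
  refine ⟨p, fun i hi => (hp i hi).1, ?_⟩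
  intro i j hij hj
  have h1 := hp i (by omega)
  have h2 := hp j hj
  rcases htot (p i) h1.1 (p j) h2.1 (by intro h; rw [h] at h1; omega) with h | h
  · exact h
  · have := hlt _ h2.1 _ h1.1 h; omega

/-- Orientation determinant. -/
def ori (a b c : Pt) : ℝ := (b.1 - a.1) * (c.2 - a.2) - (b.2 - a.2) * (c.1 - a.1)

lemma ori_ne {P : Finset Pt} (hP : GenPos P) {a b c : Pt} (ha : a ∈ P) (hb : b ∈ P) (hc : c ∈ P)
    (hab : a ≠ b) (hac : a ≠ c) (hbc : b ≠ c) : ori a b c ≠ 0 := by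
  intro h
  apply hP a ha b hb c hc hab hac hbc
  rw [collinear_iff_of_mem (p₀ := a) (by simp)]
  refine ⟨b - a, ?_⟩
  unfold ori at h
  have hpos : (b.1 - a.1) ^ 2 + (b.2 - a.2) ^ 2 ≠ 0 := by
    intro h0
    apply hab
    have h1 : b.1 - a.1 = 0 := by nlinarith [sq_nonneg (b.1 - a.1), sq_nonneg (b.2 - a.2)]
    have h2 : b.2 - a.2 = 0 := by nlinarith [sq_nonneg (b.1 - a.1), sq_nonneg (b.2 - a.2)]
    exact Prod.ext (by linarith) (by linarith)
  intro q hq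
  simp only [Set.mem_insert_iff, Set.mem_singleton_iff] at hq
  rcases hq with rfl | rfl | rfl
  · exact ⟨0, by simp⟩
  · exact ⟨1, by simp⟩
  · refine ⟨((b.1 - a.1) * (q.1 - a.1) + (b.2 - a.2) * (q.2 - a.2)) /
      ((b.1 - a.1) ^ 2 + (b.2 - a.2) ^ 2), ?_⟩
    apply Prod.ext
    · simp only [vadd_eq_add, Prod.fst_add, Prod.smul_fst, Prod.fst_sub, smul_eq_mul]
      field_simp
      linear_combination (-(b.2 - a.2)) * h
    · simp only [vadd_eq_add, Prod.snd_add, Prod.smul_snd, Prod.snd_sub, smul_eq_mul]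
      field_simp
      linear_combination (b.1 - a.1) * h

lemma not_in_tri {P : Finset Pt} (hP : ConvexPos P) {a b c d : Pt}
    (ha : a ∈ P) (hb : b ∈ P) (hc : c ∈ P) (hd : d ∈ P)
    (had : a ≠ d) (hbd : b ≠ d) (hcd : c ≠ d)
    (h1 : 0 < ori a b d) (h2 : 0 < ori b c d) (h3 : 0 < ori c a d) : False := by
  apply hP.2 d hd
  have hconv := convex_convexHull ℝ ((P.erase d : Finset Pt) : Set Pt)
  have hm : ∀ x ∈ P, x ≠ d → x ∈ convexHull ℝ ((P.erase d : Finset Pt) : Set Pt) := by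
    intro x hx hxd
    apply subset_convexHull
    simp [hx, hxd]
  have hT : 0 < ori b c d + ori c a d + ori a b d := by linarith
  have hsum := hconv.sum_mem (t := (Finset.univ : Finset (Fin 3)))
    (w := ![ori b c d / (ori b c d + ori c a d + ori a b d),
      ori c a d / (ori b c d + ori c a d + ori a b d),
      ori a b d / (ori b c d + ori c a d + ori a b d)]) (z := ![a, b, c])
    (by
      intro i _
      fin_cases i <;> simp <;> positivity)
    (by
      simp [Fin.sum_univ_three]
      field_simp)
    (by
      intro i _
      fin_cases i
      · exact hm a ha had
      · exact hm b hb hbd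
      · exact hm c hc hcd)
  convert hsum using 1
  simp only [Fin.sum_univ_three, Matrix.cons_val_zero, Matrix.cons_val_one, Matrix.cons_val]
  apply Prod.ext
  · simp only [Prod.fst_add, Prod.smul_fst, smul_eq_mul]
    field_simp
    unfold ori
    ring
  · simp only [Prod.snd_add, Prod.smul_snd, smul_eq_mul]
    field_simp
    unfold ori
    ring

/-- Cyclic enumeration of a set in convex position. -/
lemma exists_enum {P : Finset Pt} (hP : ConvexPos P) (hne : P.Nonempty) :
    ∃ p : ℕ → Pt, (∀ i < P.card, p i ∈ P) ∧ (∀ i j, i < j → j < P.card → p i ≠ p j) ∧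
      ∀ i j l, i < j → j < l → l < P.card → 0 < ori (p i) (p j) (p l) := by
  obtain ⟨o, ho, hmin⟩ := Finset.exists_min_image P (fun x => (toLex x : ℝ ×ₗ ℝ)) hne
  have hhalf : ∀ x ∈ P, x ≠ o → o.1 < x.1 ∨ (o.1 = x.1 ∧ o.2 < x.2) := by
    intro x hx hxo
    have := hmin x hx
    rw [Prod.Lex.le_iff] at this
    simp only [ofLex_toLex] at this
    rcases this with h | ⟨h, h'⟩
    · exact Or.inl h
    · refine Or.inr ⟨h, lt_of_le_of_ne h' ?_⟩
      intro h2
      exact hxo (Prod.ext h.symm h2.symm)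
  let R : Pt → Pt → Prop := fun x y => y ≠ o ∧ (x = o ∨ 0 < ori o x y)
  have hself : ∀ x, ori o x x = 0 := by intro x; unfold ori; ring
  have hswap : ∀ x y z, ori x y z = - ori x z y := by intro x y z; unfold ori; ring
  have hoo : ∀ x, ori o x o = 0 := by intro x; unfold ori; ring
  obtain ⟨p, hp1, hp2⟩ := enum_rel P R
    (by
      rintro a ha ⟨h1, h2 | h2⟩
      · exact h1 h2
      · rw [hself] at h2; exact lt_irrefl _ h2)
    (by
      rintro a ha b hb c hc ⟨h1, h2⟩ ⟨h3, h4⟩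
      refine ⟨h3, ?_⟩
      rcases h2 with h2 | h2
      · exact Or.inl h2
      rcases h4 with h4 | h4
      · exact absurd h4 h1
      by_cases hao : a = o
      · exact Or.inl hao
      right
      have ua := hhalf a ha hao
      have ub := hhalf b hb h1
      have uc := hhalf c hc h3
      have hid : (b.1 - o.1) * ori o a c =
          (a.1 - o.1) * ori o b c + (c.1 - o.1) * ori o a b := by
        unfold ori; ring
      have ha0 : 0 ≤ a.1 - o.1 := by rcases ua with h | ⟨h, -⟩ <;> linarith
      have hc0 : 0 ≤ c.1 - o.1 := by rcases uc with h | ⟨h, -⟩ <;> linarith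
      rcases ub with ub | ub
      · have hbpos : 0 < b.1 - o.1 := by linarith
        have hapos : 0 < a.1 - o.1 ∨ 0 < c.1 - o.1 := by
          rcases ua with ua | ua
          · left; linarith
          · exfalso
            unfold ori at h2
            rw [← ua.1] at h2
            nlinarith [ua.2]
        have : 0 < (b.1 - o.1) * ori o a c := by
          rw [hid]
          rcases hapos with h | h
          · have := mul_pos h h4
            have := mul_nonneg hc0 h2.le
            linarith
          · have := mul_pos h h2
            have := mul_nonneg ha0 h4.le
            linarith
        exact (pos_iff_pos_of_mul_pos this).1 hbpos
      · exfalso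
        unfold ori at h4
        rw [← ub.1] at h4
        nlinarith [ub.2])
    (by
      intro a ha b hb hab
      by_cases hao : a = o
      · exact Or.inl ⟨by rw [← hao]; exact hab.symm, Or.inl hao⟩
      by_cases hbo : b = o
      · exact Or.inr ⟨hao, Or.inl hbo⟩
      have := ori_ne hP.1 ho ha hb (Ne.symm hao) (Ne.symm hbo) hab
      rcases lt_or_gt_of_ne this with h | h
      · right
        refine ⟨hao, Or.inr ?_⟩
        rw [hswap]; linarith
      · exact Or.inl ⟨hbo, Or.inr h⟩) hne
  have hdist : ∀ i j, i < j → j < P.card → p i ≠ p j := by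
    intro i j hij hj heq
    obtain ⟨h1, h2⟩ := hp2 i j hij hj
    rw [heq] at h2
    rcases h2 with h2 | h2
    · exact h1 h2
    · rw [hself] at h2; exact lt_irrefl _ h2
  refine ⟨p, hp1, hdist, ?_⟩
  intro i j l hij hjl hl
  have hi' := hp1 i (by omega)
  have hj' := hp1 j (by omega)
  have hl' := hp1 l hl
  have dij := hdist i j hij (by omega)
  have djl := hdist j l hjl hl
  have dil := hdist i l (by omega) hl
  obtain ⟨a1, a2⟩ := hp2 i j hij (by omega)
  obtain ⟨b1, b2⟩ := hp2 j l hjl hl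
  obtain ⟨c1, c2⟩ := hp2 i l (by omega) hl
  have b3 : 0 < ori o (p j) (p l) := b2.resolve_left a1
  by_cases hio : p i = o
  · rw [hio]; exact b3
  have a3 := a2.resolve_left hio
  rcases lt_or_gt_of_ne (ori_ne hP.1 hi' hj' hl' dij dil djl) with h | h
  · exfalso
    refine not_in_tri hP ho hi' hl' hj' (Ne.symm a1) dij djl.symm a3 ?_ ?_
    · rw [hswap]; linarith
    · have : ori (p l) o (p j) = ori o (p j) (p l) := by unfold ori; ring
      rw [this]; exact b3
  · exact h

lemma segs_meet {a b c d : Pt} (h1 : 0 < ori a b c) (h2 : 0 < ori b c d) (h3 : 0 < ori a b d)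
    (h4 : 0 < ori a c d) : (openSegment ℝ a c ∩ openSegment ℝ b d).Nonempty := by
  have hs : ori a b d + ori b c d = ori a b c + ori a c d := by unfold ori; ring
  have hpos : 0 < ori a b d + ori b c d := by linarith
  refine ⟨(ori b c d / (ori a b d + ori b c d)) • a + (ori a b d / (ori a b d + ori b c d)) • c,
    ⟨_, _, by positivity, by positivity, by field_simp; ring, rfl⟩,
    ⟨ori a c d / (ori a b d + ori b c d), ori a b c / (ori a b d + ori b c d),
      by positivity, by positivity, ?_, ?_⟩⟩
  · rw [← add_div, div_eq_one_iff_eq hpos.ne']; linarith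
  · apply Prod.ext
    · simp only [Prod.fst_add, Prod.smul_fst, smul_eq_mul]
      field_simp
      unfold ori
      ring
    · simp only [Prod.snd_add, Prod.smul_snd, smul_eq_mul]
      field_simp
      unfold ori
      ring

open Classical in
lemma card_diags (n : ℕ) (hn : 3 ≤ n) :
    n * (n - 3) ≤ 2 * ((Finset.range n ×ˢ Finset.range n).filter
      (fun e => DiagOf (Finset.range n) e)).card := by
  set T := ((Finset.range n).sigma (fun j => Finset.range (j - 1))).erase ⟨n - 1, 0⟩ with hT
  have h1 : T.card ≤ ((Finset.range n ×ˢ Finset.range n).filter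
      (fun e => DiagOf (Finset.range n) e)).card := by
    apply Finset.card_le_card_of_injOn (fun x => (x.2, x.1))
    · rintro ⟨j, i⟩ hx
      have hx' : ⟨j, i⟩ ∈ T := hx
      simp only [hT, Finset.mem_erase, Finset.mem_sigma, Finset.mem_range, ne_eq,
        Sigma.mk.injEq, heq_eq_eq] at hx'
      obtain ⟨g1, g2, g3⟩ := hx'
      simp only [Finset.coe_filter, Set.mem_ofPred_eq, Finset.mem_product, Finset.mem_range, DiagOf]
      refine ⟨⟨by omega, g2⟩, by omega, g2, by omega, ⟨i + 1, by omega, by omega, by omega⟩, ?_⟩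
      by_cases hi : i = 0
      · exact ⟨n - 1, by omega, by omega⟩
      · exact ⟨0, by omega, by omega⟩
    · rintro ⟨j, i⟩ _ ⟨j', i'⟩ _ h
      simp only [Prod.mk.injEq] at h
      obtain ⟨rfl, rfl⟩ := h
      rfl
  have h2 : T.card + 1 = ∑ j ∈ Finset.range n, (j - 1) := by
    rw [hT, Finset.card_erase_add_one, Finset.card_sigma]
    · simp
    · simp only [Finset.mem_sigma, Finset.mem_range]
      omega
  have h3 : ∀ m, 2 * ∑ j ∈ Finset.range (m + 3), (j - 1) = (m + 3) * m + 2 := by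
    intro m
    induction m with
    | zero => decide
    | succ m ih =>
      rw [show m + 1 + 3 = (m + 3) + 1 from rfl, Finset.sum_range_succ, mul_add, ih,
        show m + 3 - 1 = m + 2 from rfl]
      ring
  obtain ⟨m, rfl⟩ : ∃ m, n = m + 3 := ⟨n - 3, by omega⟩
  have := h3 m
  rw [Nat.add_sub_cancel]
  omega

lemma numeric (k : ℕ) (hk : 1 ≤ k) : ∃ s : ℕ, 1 ≤ s ∧
    (k : ℝ) + 1 ≤ (2.465 * Real.sqrt k - (s - 1)) * s ∧ 2 * (s : ℝ) ≤ 2.465 * Real.sqrt k := by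
  have hs1 : 1 ≤ Nat.sqrt k := by rw [Nat.le_sqrt]; omega
  have hsq := Real.sq_sqrt (Nat.cast_nonneg k : (0 : ℝ) ≤ k)
  have hle : (Nat.sqrt k : ℝ) ≤ Real.sqrt k := Real.nat_sqrt_le_real_sqrt
  have hge : Real.sqrt k ≤ Nat.sqrt k + 1 := Real.real_sqrt_le_nat_sqrt_succ
  have h0 := Real.sqrt_nonneg (k : ℝ)
  refine ⟨Nat.sqrt k, hs1, ?_, by linarith⟩
  rcases Nat.lt_or_ge (Nat.sqrt k) 2 with h | h
  · have h1 : Nat.sqrt k = 1 := by omega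
    have hk4 : k < 4 := by
      by_contra hc
      have : 2 ≤ Nat.sqrt k := by rw [Nat.le_sqrt]; omega
      omega
    rw [h1]
    have : ((k : ℝ) + 1) / 2.465 ≤ Real.sqrt k := by
      apply Real.le_sqrt_of_sq_le
      interval_cases k <;> norm_num
    rw [div_le_iff₀ (by norm_num)] at this
    push_cast
    linarith
  · have h' : (2 : ℝ) ≤ Nat.sqrt k := by exact_mod_cast h
    nlinarith [mul_nonneg (sub_nonneg.2 hle) (sub_nonneg.2 hge)]

/-- For `n` points in convex position and `k ≥ 1`, every partition of `K(P)`
into `k`-plane classes has at least `(n-1)/(4.93·√k)` classes. -/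
theorem stmt_4 (n : ℕ) (P : Finset Pt) (hP : ConvexPos P) (hcard : P.card = n)
    (k : ℕ) (hk : 1 ≤ k)
    (c : ℕ) (F : Fin c → Set (Sym2 Pt))
    (hunion : (⋃ i, F i) = KEdges P)
    (hdisj : Pairwise fun i j => Disjoint (F i) (F j))
    (hplane : ∀ i, KPlane k (F i)) :
    ((n : ℝ) - 1) / (4.93 * Real.sqrt k) ≤ (c : ℝ) := by
  classical
  have hsk : (1 : ℝ) ≤ Real.sqrt k := by
    rw [Real.one_le_sqrt]; exact_mod_cast hk
  rw [div_le_iff₀ (by positivity)]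
  rcases Nat.lt_or_ge n 2 with h2 | h2
  · have : (n : ℝ) ≤ 1 := by exact_mod_cast (by omega : n ≤ 1)
    have : (0 : ℝ) ≤ c * (4.93 * Real.sqrt k) := by positivity
    linarith
  rcases Nat.lt_or_ge n 4 with h4 | h4
  · have hn3 : (n : ℝ) ≤ 3 := by exact_mod_cast (by omega : n ≤ 3)
    have hc : 1 ≤ c := by
      obtain ⟨a, ha, b, hb, hab⟩ := Finset.one_lt_card.1 (by omega : 1 < P.card)
      have : s(a, b) ∈ ⋃ i, F i := by rw [hunion]; exact ⟨a, ha, b, hb, hab, rfl⟩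
      obtain ⟨i, -⟩ := Set.mem_iUnion.1 this
      have := i.2
      omega
    have hc' : (1 : ℝ) ≤ c := by exact_mod_cast hc
    nlinarith
  have hne : P.Nonempty := by rw [← Finset.card_pos]; omega
  obtain ⟨p, hp1, hp2, hp3⟩ := exists_enum hP hne
  rw [hcard] at hp1 hp2 hp3
  have hinj : ∀ i j, i < n → j < n → p i = p j → i = j := by
    intro i j hi hj h
    rcases lt_trichotomy i j with h1 | h1 | h1
    · exact absurd h (hp2 i j h1 hj)
    · exact h1
    · exact absurd h.symm (hp2 j i h1 hi)
  have hcross : ∀ a b c d, a < b → b < c → c < d → d < n →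
      Cross s(p a, p c) s(p b, p d) ∧ Cross s(p b, p d) s(p a, p c) := by
    intro a b c d hab hbc hcd hd
    have hm := segs_meet (hp3 a b c hab hbc (by omega)) (hp3 b c d hbc hcd hd)
      (hp3 a b d hab (by omega) hd) (hp3 a c d (by omega) hcd hd)
    have n1 := hp2 a b hab (by omega)
    have n2 := hp2 a d (by omega) hd
    have n3 := hp2 b c hbc (by omega)
    have n4 := hp2 c d hcd hd
    constructor
    · refine ⟨?_, _, _, _, _, rfl, rfl, hm⟩
      intro x hx hx'
      rw [Sym2.mem_iff] at hx hx'
      rcases hx with rfl | rfl <;> rcases hx' with h | h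
      · exact n1 h
      · exact n2 h
      · exact n3 h.symm
      · exact n4 h
    · refine ⟨?_, _, _, _, _, rfl, rfl, by rwa [Set.inter_comm]⟩
      intro x hx' hx
      rw [Sym2.mem_iff] at hx hx'
      rcases hx with rfl | rfl <;> rcases hx' with h | h
      · exact n1 h
      · exact n2 h
      · exact n3 h.symm
      · exact n4 h
  have hfin : ∀ i, (F i).Finite := by
    intro i
    have hK : (KEdges P).Finite := by
      apply ((P ×ˢ P).image (fun x => s(x.1, x.2))).finite_toSet.subset
      rintro e ⟨a, ha, b, hb, -, rfl⟩
      simp only [Finset.coe_image, Set.mem_image, Finset.mem_coe, Finset.mem_product]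
      exact ⟨(a, b), ⟨ha, hb⟩, rfl⟩
    apply hK.subset
    rw [← hunion]
    exact Set.subset_iUnion F i
  set D := (Finset.range n ×ˢ Finset.range n).filter
      (fun e => DiagOf (Finset.range n) e) with hD
  have hDd : ∀ e ∈ D, DiagOf (Finset.range n) e := fun e he => (Finset.mem_filter.1 he).2
  let Ed : Fin c → Finset (ℕ × ℕ) := fun i => D.filter (fun e => s(p e.1, p e.2) ∈ F i)
  obtain ⟨s, hs1, hs2, hs3⟩ := numeric k hk
  have hbound : ∀ i, ((Ed i).card : ℝ) ≤ 2.465 * Real.sqrt k * ((n : ℝ) - 3) := by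
    intro i
    apply comb k s _ hs1 hs2 hs3 n (Finset.range n) (Finset.card_range n) (by omega)
    · intro e he
      exact hDd e (Finset.mem_filter.1 he).1
    · intro e he
      obtain ⟨heD, heF⟩ := Finset.mem_filter.1 he
      refine le_trans ?_ (hplane i _ heF)
      rw [← Set.ncard_coe_finset]
      apply Set.ncard_le_ncard_of_injOn (fun f : ℕ × ℕ => s(p f.1, p f.2))
        (ht := (hfin i).subset (fun f hf => hf.1))
      · intro f hf
        simp only [Finset.coe_filter, Set.mem_ofPred_eq] at hf
        obtain ⟨hf1, hf2⟩ := hf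
        obtain ⟨hfD, hfF⟩ := Finset.mem_filter.1 hf1
        refine ⟨hfF, ?_⟩
        have b1 := Finset.mem_range.1 (hDd e heD).2.1
        have b2 := Finset.mem_range.1 (hDd f hfD).2.1
        rcases hf2 with h | h
        · exact (hcross f.1 e.1 f.2 e.2 h.1 h.2.1 h.2.2 b1).2
        · exact (hcross e.1 f.1 e.2 f.2 h.1 h.2.1 h.2.2 b2).1
      · intro f hf g hg hfg
        simp only [Finset.coe_filter, Set.mem_ofPred_eq] at hf hg
        have df := hDd f (Finset.mem_filter.1 hf.1).1
        have dg := hDd g (Finset.mem_filter.1 hg.1).1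
        obtain ⟨f1, f2, f3, -⟩ := df
        obtain ⟨g1, g2, g3, -⟩ := dg
        rw [Finset.mem_range] at f1 f2 g1 g2
        rcases Sym2.eq_iff.1 hfg with ⟨h, h'⟩ | ⟨h, h'⟩
        · exact Prod.ext (hinj _ _ f1 g1 h) (hinj _ _ f2 g2 h')
        · have := hinj _ _ f1 g2 h
          have := hinj _ _ f2 g1 h'
          omega
  have hcov : D ⊆ Finset.univ.biUnion Ed := by
    intro e he
    obtain ⟨e1, e2, e3, -⟩ := hDd e he
    rw [Finset.mem_range] at e1 e2
    have : s(p e.1, p e.2) ∈ ⋃ i, F i := by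
      rw [hunion]
      exact ⟨_, hp1 _ e1, _, hp1 _ e2, hp2 _ _ e3 e2, rfl⟩
    obtain ⟨i, hi⟩ := Set.mem_iUnion.1 this
    exact Finset.mem_biUnion.2 ⟨i, Finset.mem_univ i, Finset.mem_filter.2 ⟨he, hi⟩⟩
  have hDc : (D.card : ℝ) ≤ c * (2.465 * Real.sqrt k * ((n : ℝ) - 3)) := by
    calc (D.card : ℝ) ≤ ((∑ i, (Ed i).card : ℕ) : ℝ) := by
          exact_mod_cast (Finset.card_le_card hcov).trans Finset.card_biUnion_le
      _ = ∑ i, ((Ed i).card : ℝ) := by push_cast; rfl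
      _ ≤ ∑ _i : Fin c, 2.465 * Real.sqrt k * ((n : ℝ) - 3) :=
          Finset.sum_le_sum (fun i _ => hbound i)
      _ = _ := by simp
  have hlow : (n : ℝ) * (n - 3) ≤ 2 * D.card := by
    have := card_diags n (by omega)
    have h3 : ((n - 3 : ℕ) : ℝ) = (n : ℝ) - 3 := by
      rw [Nat.cast_sub (by omega)]; norm_num
    rw [← h3]
    exact_mod_cast this
  have hn4 : (4 : ℝ) ≤ n := by exact_mod_cast h4
  have hfinal : (n : ℝ) ≤ c * (4.93 * Real.sqrt k) := by
    apply le_of_mul_le_mul_right _ (by linarith : (0 : ℝ) < (n : ℝ) - 3)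
    nlinarith
  linarith
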